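/- The unique information is bounded above by conditional entropy: Un(X→Z|Y) ≤ H(Z|Y), where H(Z|Y) is the conditional Shannon entropy computed from the (𝒴,𝒵)-marginal of p. -/

import Mathlib

open Finset

/-- Shannon entropy of a distribution on a finite type (natural-log base). -/
noncomputable def ent {α : Type*} [Fintype α] (p : α → ℝ) : ℝ :=
  ∑ a, Real.negMulLog (p a)

/-- Mutual information between the two coordinates of a joint distribution. -/
noncomputable def mutInfo {α β : Type*} [Fintype α] [Fintype β] (q : α × β → ℝ) : ℝ :=
  ent (fun a => ∑ b, q (a, b)) + ent (fun b => ∑ a, q (a, b)) - ent q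

/-- Conditional entropy of the first coordinate given the second: H(A|B) = H(A,B) - H(B). -/
noncomputable def condEntFst {α β : Type*} [Fintype α] [Fintype β] (q : α × β → ℝ) : ℝ :=
  ent q - ent (fun b => ∑ a, q (a, b))

/-- Conditional entropy of the second coordinate given the first: H(B|A) = H(A,B) - H(A). -/
noncomputable def condEntSnd {α β : Type*} [Fintype α] [Fintype β] (q : α × β → ℝ) : ℝ :=
  ent q - ent (fun a => ∑ b, q (a, b))

section PID

variable {X Y Z : Type*} [Fintype X] [Fintype Y] [Fintype Z]

/-- 𝒳-marginal of a joint distribution on 𝒳×𝒴×𝒵. -/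
noncomputable def pX (p : X × Y × Z → ℝ) (x : X) : ℝ := ∑ y, ∑ z, p (x, y, z)

/-- 𝒴-marginal. -/
noncomputable def pY (p : X × Y × Z → ℝ) (y : Y) : ℝ := ∑ x, ∑ z, p (x, y, z)

/-- 𝒵-marginal. -/
noncomputable def pZ (p : X × Y × Z → ℝ) (z : Z) : ℝ := ∑ x, ∑ y, p (x, y, z)

/-- The do-operation: q(x,y,z) = p(x,y,z)·c(z)/p_Z(z) if p_Z(z) > 0, else 0. -/
noncomputable def doOp (p : X × Y × Z → ℝ) (c : Z → ℝ) : X × Y × Z → ℝ :=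
  fun t => if 0 < pZ p t.2.2 then p t * c t.2.2 / pZ p t.2.2 else 0

/-- (𝒳,𝒵)-marginal. -/
noncomputable def margXZ (p : X × Y × Z → ℝ) : X × Z → ℝ := fun t => ∑ y, p (t.1, y, t.2)

/-- (𝒴,𝒵)-marginal. -/
noncomputable def margYZ (p : X × Y × Z → ℝ) : Y × Z → ℝ := fun t => ∑ x, p (x, t.1, t.2)

/-- (𝒳,𝒴)-marginal. -/
noncomputable def margXY (p : X × Y × Z → ℝ) : X × Y → ℝ := fun t => ∑ z, p (t.1, t.2, z)

/-- c_y(z) = Pr(Z = z | Y = y). -/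
noncomputable def cy (p : X × Y × Z → ℝ) (y : Y) : Z → ℝ :=
  fun z => (∑ x, p (x, y, z)) / pY p y

/-- The distribution of (A_y, B_y, C_y) = do(p | c_y). -/
noncomputable def doy (p : X × Y × Z → ℝ) (y : Y) : X × Y × Z → ℝ := doOp p (cy p y)

/-- c^x(z) = Pr(Z = z | X = x). -/
noncomputable def cx (p : X × Y × Z → ℝ) (x : X) : Z → ℝ :=
  fun z => (∑ y, p (x, y, z)) / pX p x

/-- The distribution of (A^x, B^x, C^x) = do(p | c^x). -/
noncomputable def dox (p : X × Y × Z → ℝ) (x : X) : X × Y × Z → ℝ := doOp p (cx p x)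

/-- Unique information Un(X→Z|Y) = Σ_{y : p_Y(y)>0} p_Y(y)·I(A_y;C_y). -/
noncomputable def Un (p : X × Y × Z → ℝ) : ℝ :=
  ∑ y ∈ Finset.univ.filter (fun y => 0 < pY p y), pY p y * mutInfo (margXZ (doy p y))

/-- Unique information Un(Y→Z|X) = Σ_{x : p_X(x)>0} p_X(x)·I(B^x;C^x). -/
noncomputable def UnYX (p : X × Y × Z → ℝ) : ℝ :=
  ∑ x ∈ Finset.univ.filter (fun x => 0 < pX p x), pX p x * mutInfo (margYZ (dox p x))

/-- Redundant information Red(X,Y→Z) = I(X;Z) − Un(X→Z|Y). -/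
noncomputable def Red (p : X × Y × Z → ℝ) : ℝ := mutInfo (margXZ p) - Un p

/-- Conditional mutual information I(X;Z|Y) = H(X,Y) + H(Y,Z) − H(Y) − H(X,Y,Z). -/
noncomputable def condMI (p : X × Y × Z → ℝ) : ℝ :=
  ent (margXY p) + ent (margYZ p) - ent (pY p) - ent p

/-- Synergistic information Syn(X,Y→Z) = I(X;Z|Y) − Un(X→Z|Y). -/
noncomputable def Syn (p : X × Y × Z → ℝ) : ℝ := condMI p - Un p

end PID

/-!
The do-operation `do(p|c)` replaces the law of `Z` by `c`, so `C_y` is distributed as `Z` given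
`Y = y`. Hence `I(A_y;C_y) ≤ H(C_y) = H(Z|Y=y)`, and averaging over `y` gives `H(Z|Y)` by the chain
rule. The chain rule also yields `I(A;C) ≤ H(C)`: it exhibits `H(C|A)` as an average of entropies.
-/

section Entropy

variable {α β : Type*} [Fintype α] [Fintype β]

theorem ent_nonneg {f : α → ℝ} (hf₀ : ∀ a, 0 ≤ f a) (hf₁ : ∀ a, f a ≤ 1) : 0 ≤ ent f :=
  sum_nonneg fun a _ => Real.negMulLog_nonneg (hf₀ a) (hf₁ a)

theorem ent_const_mul (c : ℝ) (f : α → ℝ) :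
    ent (fun a => c * f a) = (∑ a, f a) * Real.negMulLog c + c * ent f := by
  simp only [ent, Real.negMulLog_mul, sum_add_distrib, sum_mul, mul_sum]

theorem sum_mul_ent_div_sum {f : α → ℝ} (hf : ∀ a, 0 ≤ f a) :
    (∑ a, f a) * ent (fun a => f a / ∑ a', f a') = ent f - Real.negMulLog (∑ a, f a) := by
  by_cases hm : ∑ a, f a = 0
  · have hf_zero : ∀ a, f a = 0 := fun a =>
      (sum_eq_zero_iff_of_nonneg fun a _ => hf a).mp hm a (mem_univ a)
    simp [ent, hf_zero]
  · have hscale := ent_const_mul (∑ a, f a) fun a => f a / ∑ a', f a'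
    simp only [mul_div_cancel₀ _ hm, ← sum_div, div_self hm, one_mul] at hscale
    linarith

theorem condEntSnd_eq_sum_mul_ent {q : α × β → ℝ} (hq : ∀ t, 0 ≤ q t) :
    condEntSnd q = ∑ a, (∑ b, q (a, b)) * ent (fun b => q (a, b) / ∑ b', q (a, b')) := by
  simp only [sum_mul_ent_div_sum fun b => hq (_, b), sum_sub_distrib]
  simp only [condEntSnd, ent, Fintype.sum_prod_type]

theorem condEntSnd_nonneg {q : α × β → ℝ} (hq : ∀ t, 0 ≤ q t) : 0 ≤ condEntSnd q := by
  rw [condEntSnd_eq_sum_mul_ent hq]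
  have hsum : ∀ a, 0 ≤ ∑ b, q (a, b) := fun a => sum_nonneg fun b _ => hq (a, b)
  refine sum_nonneg fun a _ => mul_nonneg (hsum a) (ent_nonneg (fun b => ?_) fun b => ?_)
  · exact div_nonneg (hq (a, b)) (hsum a)
  · exact div_le_one_of_le₀ (single_le_sum (fun b _ => hq (a, b)) (mem_univ b)) (hsum a)

theorem mutInfo_eq_ent_sub_condEntSnd (q : α × β → ℝ) :
    mutInfo q = ent (fun b => ∑ a, q (a, b)) - condEntSnd q := by
  unfold mutInfo condEntSnd
  ring

theorem mutInfo_le_ent_snd {q : α × β → ℝ} (hq : ∀ t, 0 ≤ q t) :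
    mutInfo q ≤ ent (fun b => ∑ a, q (a, b)) := by
  rw [mutInfo_eq_ent_sub_condEntSnd]
  exact sub_le_self _ (condEntSnd_nonneg hq)

end Entropy

section DoOperation

variable {X Y Z : Type*} {p : X × Y × Z → ℝ}

theorem margXZ_nonneg [Fintype Y] (hp : ∀ t, 0 ≤ p t) (t : X × Z) : 0 ≤ margXZ p t :=
  sum_nonneg fun _ _ => hp _

theorem margYZ_nonneg [Fintype X] (hp : ∀ t, 0 ≤ p t) (t : Y × Z) : 0 ≤ margYZ p t :=
  sum_nonneg fun _ _ => hp _

theorem pY_nonneg [Fintype X] [Fintype Z] (hp : ∀ t, 0 ≤ p t) (y : Y) : 0 ≤ pY p y :=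
  sum_nonneg fun _ _ => sum_nonneg fun _ _ => hp _

theorem sum_margYZ_eq_pY [Fintype X] [Fintype Z] (p : X × Y × Z → ℝ) (y : Y) :
    ∑ z, margYZ p (y, z) = pY p y :=
  sum_comm

theorem margYZ_le_pZ [Fintype X] [Fintype Y] (hp : ∀ t, 0 ≤ p t) (y : Y) (z : Z) :
    margYZ p (y, z) ≤ pZ p z :=
  sum_le_sum fun x _ => single_le_sum (f := fun y => p (x, y, z)) (fun _ _ => hp _) (mem_univ y)

theorem cy_nonneg [Fintype X] [Fintype Z] (hp : ∀ t, 0 ≤ p t) (y : Y) (z : Z) : 0 ≤ cy p y z :=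
  div_nonneg (margYZ_nonneg hp (y, z)) (pY_nonneg hp y)

theorem cy_eq_zero_of_pZ_nonpos [Fintype X] [Fintype Y] [Fintype Z] (hp : ∀ t, 0 ≤ p t) (y : Y)
    {z : Z} (hz : pZ p z ≤ 0) : cy p y z = 0 := by
  have hzero : margYZ p (y, z) = 0 :=
    le_antisymm ((margYZ_le_pZ hp y z).trans hz) (margYZ_nonneg hp (y, z))
  exact div_eq_zero_iff.mpr (Or.inl hzero)

theorem doOp_nonneg [Fintype X] [Fintype Y] (hp : ∀ t, 0 ≤ p t) {c : Z → ℝ} (hc : ∀ z, 0 ≤ c z)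
    (t : X × Y × Z) : 0 ≤ doOp p c t := by
  unfold doOp
  split_ifs with hz
  · exact div_nonneg (mul_nonneg (hp t) (hc _)) hz.le
  · exact le_rfl

theorem pZ_doOp [Fintype X] [Fintype Y] {c : Z → ℝ} {z : Z} (hc : pZ p z ≤ 0 → c z = 0) :
    pZ (doOp p c) z = c z := by
  by_cases hz : 0 < pZ p z
  · calc pZ (doOp p c) z
        = ∑ x, ∑ y, p (x, y, z) * c z / pZ p z :=
          sum_congr rfl fun _ _ => sum_congr rfl fun _ _ => if_pos hz
      _ = pZ p z * c z / pZ p z := by simp only [pZ, sum_mul, sum_div]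
      _ = c z := mul_div_cancel_left₀ _ hz.ne'
  · calc pZ (doOp p c) z
        = 0 := sum_eq_zero fun _ _ => sum_eq_zero fun _ _ => if_neg hz
      _ = c z := (hc (not_lt.mp hz)).symm

theorem pZ_doy [Fintype X] [Fintype Y] [Fintype Z] (hp : ∀ t, 0 ≤ p t) (y : Y) :
    pZ (doy p y) = cy p y :=
  funext fun _ => pZ_doOp (cy_eq_zero_of_pZ_nonpos hp y)

theorem mutInfo_margXZ_doy_le_ent_cy [Fintype X] [Fintype Y] [Fintype Z]
    (hp : ∀ t, 0 ≤ p t) (y : Y) :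
    mutInfo (margXZ (doy p y)) ≤ ent (cy p y) :=
  calc mutInfo (margXZ (doy p y))
      ≤ ent (pZ (doy p y)) := mutInfo_le_ent_snd (margXZ_nonneg (doOp_nonneg hp (cy_nonneg hp y)))
    _ = ent (cy p y) := by rw [pZ_doy hp]

theorem condEntSnd_margYZ_eq_sum_mul_ent_cy [Fintype X] [Fintype Y] [Fintype Z]
    (hp : ∀ t, 0 ≤ p t) :
    condEntSnd (margYZ p) = ∑ y, pY p y * ent (cy p y) := by
  simp only [condEntSnd_eq_sum_mul_ent (margYZ_nonneg hp), sum_margYZ_eq_pY]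
  rfl

end DoOperation

theorem stmt7_general {X Y Z : Type*} [Fintype X] [Fintype Y] [Fintype Z]
    (p : X × Y × Z → ℝ) (hp : ∀ t, 0 ≤ p t) : Un p ≤ condEntSnd (margYZ p) :=
  calc Un p
      ≤ ∑ y with 0 < pY p y, pY p y * ent (cy p y) :=
        sum_le_sum fun y _ =>
          mul_le_mul_of_nonneg_left (mutInfo_margXZ_doy_le_ent_cy hp y) (pY_nonneg hp y)
    _ = ∑ y, pY p y * ent (cy p y) :=
        sum_filter_of_ne fun y _ hy => (pY_nonneg hp y).lt_of_ne' (left_ne_zero_of_mul hy)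
    _ = condEntSnd (margYZ p) := (condEntSnd_margYZ_eq_sum_mul_ent_cy hp).symm

theorem stmt7 {X Y Z : Type*} [Fintype X] [Fintype Y] [Fintype Z]
    [Nonempty X] [Nonempty Y] [Nonempty Z]
    (p : X × Y × Z → ℝ) (hp0 : ∀ t, 0 ≤ p t) (hp1 : ∑ t, p t = 1) :
    Un p ≤ condEntSnd (margYZ p) :=
  stmt7_general p hp0
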